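/- Let ℓ be an odd integer, let ŷ₂: ℍ → ℂ be holomorphic, and define ŷ₁(z) := (√2 z)^{−ℓ} ŷ₂(−1/(2z)). Suppose that ŷ₂(z+1) = ŷ₂(z) for all z ∈ ℍ, that there is a constant d ∈ ℂ with ŷ₁(z+1) = ŷ₁(z) + d·ŷ₂(z) for all z ∈ ℍ, and that ŷ₁ and ŷ₂ are linearly independent over ℂ. Then d² = 2, i.e. d = ±√2. -/

import Mathlib

noncomputable section

open Complex Matrix Filter Topology

abbrev SL2R := Matrix.SpecialLinearGroup (Fin 2) ℝ
abbrev SL2Z := Matrix.SpecialLinearGroup (Fin 2) ℤ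

/-- The upper half-plane, as a subset of `ℂ`. -/
def UHP : Set ℂ := {z : ℂ | 0 < z.im}

/-- The embedding of `SL(2,ℤ)` into `SL(2,ℝ)`. -/
def toR : SL2Z →* SL2R := Matrix.SpecialLinearGroup.map (Int.castRingHom ℝ)

/-- `SL(2,ℤ)` as a subgroup of `SL(2,ℝ)`. -/
def SL2ZR : Subgroup SL2R := Subgroup.map toR ⊤

/-- Möbius action of a real matrix on a complex number. -/
def moeb (γ : SL2R) (z : ℂ) : ℂ :=
  ((γ.1 0 0 : ℂ) * z + (γ.1 0 1 : ℂ)) / ((γ.1 1 0 : ℂ) * z + (γ.1 1 1 : ℂ))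

/-- The automorphy factor `cz + d`. -/
def jfac (γ : SL2R) (z : ℂ) : ℂ := (γ.1 1 0 : ℂ) * z + (γ.1 1 1 : ℂ)

/-- A holomorphic modular form of weight `k` and character `χ` on `Γ ≤ SL(2,ℝ)`
(for `Γ` commensurable with `SL(2,ℤ)`): holomorphic on `ℍ`, satisfying the
transformation law, and holomorphic (bounded) at every cusp. -/
structure IsModularForm (Γ : Subgroup SL2R) (χ : SL2R → ℂ) (k : ℤ) (f : ℂ → ℂ) : Prop where
  holo : DifferentiableOn ℂ f UHP
  transform : ∀ γ ∈ Γ, ∀ z ∈ UHP, f (moeb γ z) = χ γ * jfac γ z ^ k * f z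
  bdd_at_cusps : ∀ σ : SL2Z, ∃ C : ℝ, ∀ z ∈ UHP, 1 ≤ z.im →
    ‖jfac (toR σ) z ^ (-k) * f (moeb (toR σ) z)‖ ≤ C

/-- A finite-order character of `Γ`. -/
def IsCharacter (Γ : Subgroup SL2R) (χ : SL2R → ℂ) : Prop :=
  (∀ γ ∈ Γ, ∀ δ ∈ Γ, χ (γ * δ) = χ γ * χ δ) ∧
    ∃ n : ℕ, 0 < n ∧ ∀ γ ∈ Γ, χ γ ^ n = 1

/-- `φ` is quasimodular of weight 2 and depth 1 on `Γ`, with constant `α`: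
`(cz+d)⁻² φ(γz) = φ(z) + α c/(cz+d)`. -/
def IsQuasiWt2 (Γ : Subgroup SL2R) (α : ℂ) (φ : ℂ → ℂ) : Prop :=
  ∀ γ ∈ Γ, ∀ z ∈ UHP,
    (jfac γ z)⁻¹ ^ 2 * φ (moeb γ z) = φ z + α * (γ.1 1 0 : ℂ) / jfac γ z

/-- `f` has vanishing order `ν` at the cusp `∞`, with respect to `q_N = e^{2πiz/N}`:
`q_N^{-ν}·f(z)` tends to a nonzero constant as `Im z → ∞`. -/
def VOrder (N : ℝ) (f : ℂ → ℂ) (ν : ℝ) : Prop :=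
  ∃ c : ℂ, c ≠ 0 ∧ ∀ ε : ℝ, 0 < ε → ∃ Y : ℝ, ∀ z : ℂ, Y ≤ z.im →
    ‖Complex.exp (-(2 * Real.pi * Complex.I * (ν : ℂ) * z / (N : ℂ))) * f z - c‖ < ε


/-!
The restrictions `f₁`, `f₂` of `ŷ₁`, `ŷ₂` to `ℍ` satisfy `f₂ ∣ S₂ = f₁` and, as `S₂² = -I`,
also `f₁ ∣ S₂ = ε f₂` with `ε = (-1)^ℓ`. Hence `A = · ∣ T S₂` acts by `f₂ ↦ f₁ ↦ d f₁ + ε f₂`, and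
`(T S₂)⁴ = -I` gives `A⁴ f₂ = ε f₂`, which expands to
`d (d² + 2ε) f₁ + ε (d² + ε - 1) f₂ = 0`.
Subtracting this relation from its translate by `T` leaves `d² (d² + 2ε) f₂ = 0`. As `f₂ ≠ 0`, the
coefficient of `f₁` vanishes, hence so does that of `f₂`: `d² = 1 - ε`.
-/

open UpperHalfPlane
open scoped ModularForm

section LinearAlgebra

variable {R M : Type*} [CommRing R] [AddCommGroup M] [Module R M] {f₁ f₂ : M} {d ε : R}

lemma pow_four_apply_of_companion {A : Module.End R M}
    (hA₂ : A f₂ = f₁) (hA₁ : A f₁ = d • f₁ + ε • f₂) :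
    (A ^ 4) f₂ = (d * (d ^ 2 + 2 * ε)) • f₁ + (ε * (d ^ 2 + ε)) • f₂ := by
  have hA₂_sq : A (A f₂) = d • f₁ + ε • f₂ := by rw [hA₂, hA₁]
  have hA₂_cube : A (A (A f₂)) = (d ^ 2 + ε) • f₁ + (d * ε) • f₂ := by
    rw [hA₂_sq, map_add, map_smul, map_smul, hA₁, hA₂]
    module
  calc (A ^ 4) f₂ = A (A (A (A f₂))) := rfl
    _ = (d ^ 2 + ε) • (d • f₁ + ε • f₂) + (d * ε) • f₁ := by
      rw [hA₂_cube, map_add, map_smul, map_smul, hA₁, hA₂]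
    _ = (d * (d ^ 2 + 2 * ε)) • f₁ + (ε * (d ^ 2 + ε)) • f₂ := by module

lemma mul_smul_eq_zero_of_unipotent {T : Module.End R M} {a b : R}
    (hT₂ : T f₂ = f₂) (hT₁ : T f₁ = f₁ + d • f₂) (hab : a • f₁ + b • f₂ = 0) :
    (a * d) • f₂ = 0 := by
  have hTab : a • (f₁ + d • f₂) + b • f₂ = 0 := by
    rw [← hT₁, ← map_smul, ← congrArg (b • ·) hT₂, ← map_smul, ← map_add, hab, map_zero]
  calc (a * d) • f₂ = a • (f₁ + d • f₂) + b • f₂ - (a • f₁ + b • f₂) := by module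
    _ = 0 := by rw [hTab, hab, sub_zero]

theorem sq_eq_one_sub_of_pow_four_apply [IsDomain R] [Module.IsTorsionFree R M]
    {S T : Module.End R M} (hε : ε ≠ 0) (hf₂ : f₂ ≠ 0)
    (hS₂ : S f₂ = f₁) (hS₁ : S f₁ = ε • f₂) (hT₂ : T f₂ = f₂) (hT₁ : T f₁ = f₁ + d • f₂)
    (hST : ((S * T) ^ 4) f₂ = ε • f₂) :
    d ^ 2 = 1 - ε := by
  have hA₂ : (S * T) f₂ = f₁ := by rw [Module.End.mul_apply, hT₂, hS₂]
  have hA₁ : (S * T) f₁ = d • f₁ + ε • f₂ := by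
    rw [Module.End.mul_apply, hT₁, map_add, map_smul, hS₁, hS₂, add_comm]
  have hrel : (d * (d ^ 2 + 2 * ε)) • f₁ + (ε * (d ^ 2 + ε - 1)) • f₂ = 0 := by
    rw [pow_four_apply_of_companion hA₂ hA₁, ← sub_eq_zero] at hST
    rw [← hST]
    module
  have hcoeff₁ : d * (d ^ 2 + 2 * ε) = 0 := by
    have hmul_d : d * (d ^ 2 + 2 * ε) * d = 0 :=
      (smul_eq_zero.mp (mul_smul_eq_zero_of_unipotent hT₂ hT₁ hrel)).resolve_right hf₂
    rcases mul_eq_zero.mp hmul_d with hcoeff | hd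
    · exact hcoeff
    · rw [hd, zero_mul]
  have hcoeff₂ : d ^ 2 + ε - 1 = 0 := by
    simpa [hcoeff₁, hε, hf₂] using hrel
  linear_combination hcoeff₂

end LinearAlgebra

section Slash

/-- The weight-`k` slash operator of `γ ∈ SL(2, ℝ)`, as a `ℂ`-linear endomorphism of the functions
on `ℍ`. The slash action is a right action, so `slashEnd k` reverses products. -/
def slashEnd (k : ℤ) (γ : SL2R) : Module.End ℂ (ℍ → ℂ) where
  toFun f := f ∣[k] SpecialLinearGroup.mapGL ℝ γ
  map_add' := SlashAction.add_slash k _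
  map_smul' c f := by simp [ModularForm.smul_slash, σ]

variable (k : ℤ) (γ δ : SL2R)

lemma slashEnd_apply (f : ℍ → ℂ) : slashEnd k γ f = f ∣[k] SpecialLinearGroup.mapGL ℝ γ := rfl

lemma slashEnd_apply_apply (f : ℍ → ℂ) (τ : ℍ) :
    slashEnd k γ f τ = jfac γ τ ^ (-k) * f (γ • τ) := by
  have hsmul : γ • τ = SpecialLinearGroup.mapGL ℝ γ • τ := rfl
  simp [hsmul, slashEnd_apply, ModularForm.slash_apply, σ, denom, jfac, mul_comm]

lemma slashEnd_one : slashEnd k 1 = 1 := by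
  ext1 f
  rw [slashEnd_apply, map_one, SlashAction.slash_one, Module.End.one_apply]

lemma slashEnd_mul : slashEnd k (γ * δ) = slashEnd k δ * slashEnd k γ := by
  ext1 f
  simp only [slashEnd_apply, Module.End.mul_apply, map_mul, SlashAction.slash_mul]

lemma slashEnd_pow (n : ℕ) : slashEnd k (γ ^ n) = slashEnd k γ ^ n := by
  induction n with
  | zero => rw [pow_zero, pow_zero, slashEnd_one]
  | succ n ih => rw [pow_succ, slashEnd_mul, ih, pow_succ']

lemma slashEnd_neg_one_apply (f : ℍ → ℂ) : slashEnd k (-1) f = ((-1 : ℂ) ^ k) • f := by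
  ext τ
  have hsmul : (-1 : SL2R) • τ = τ := by
    ext
    simp [coe_specialLinearGroup_apply]
  simp [slashEnd_apply_apply, hsmul, jfac, ← _root_.inv_zpow]

end Slash

section Gamma0PlusTwo

/-- The translation `T : τ ↦ τ + 1`. -/
def translation : SL2R := ⟨!![1, 1; 0, 1], by simp⟩

/-- The Fricke involution `S₂ : τ ↦ -1 / (2τ)` of level two. -/
def frickeTwo : SL2R := ⟨!![0, -(√2)⁻¹; √2, 0], by simp⟩

lemma coe_translation : translation.1 = !![1, 1; 0, 1] := rfl

lemma coe_frickeTwo : frickeTwo.1 = !![0, -(√2)⁻¹; √2, 0] := rfl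

lemma frickeTwo_sq : frickeTwo ^ 2 = -1 := by
  ext i j
  fin_cases i <;> fin_cases j <;> simp [coe_frickeTwo, sq]

lemma coe_translation_mul_coe_frickeTwo_sq :
    (translation.1 * frickeTwo.1) ^ 2 = !![1, -1; 2, -1] := by
  norm_num [coe_translation, coe_frickeTwo, sq]

lemma translation_mul_frickeTwo_pow_four : (translation * frickeTwo) ^ 4 = -1 := by
  ext i j
  rw [pow_mul (translation * frickeTwo) 2 2]
  fin_cases i <;> fin_cases j <;>
    norm_num [coe_translation_mul_coe_frickeTwo_sq, sq !![_, _; _, _]]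

lemma coe_translation_smul (τ : ℍ) : ((translation • τ : ℍ) : ℂ) = τ + 1 := by
  simp [coe_specialLinearGroup_apply, coe_translation]

lemma coe_frickeTwo_smul (τ : ℍ) : ((frickeTwo • τ : ℍ) : ℂ) = -1 / (2 * τ) := by
  have hsq : (√2 : ℂ) * √2 = 2 := by
    rw [← ofReal_mul, Real.mul_self_sqrt zero_le_two, ofReal_ofNat]
  calc ((frickeTwo • τ : ℍ) : ℂ) = -(√2 : ℂ)⁻¹ / (√2 * τ) := by
        simp [coe_specialLinearGroup_apply, coe_frickeTwo]
    _ = -1 / (√2 * √2 * τ) := by ring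
    _ = -1 / (2 * τ) := by rw [hsq]

lemma jfac_translation (z : ℂ) : jfac translation z = 1 := by simp [jfac, coe_translation]

lemma jfac_frickeTwo (z : ℂ) : jfac frickeTwo z = √2 * z := by simp [jfac, coe_frickeTwo]

theorem sq_eq_one_sub_neg_one_zpow_of_slashEnd {k : ℤ} {f₁ f₂ : ℍ → ℂ} {d : ℂ} (hf₂ : f₂ ≠ 0)
    (hS₂ : slashEnd k frickeTwo f₂ = f₁) (hT₂ : slashEnd k translation f₂ = f₂)
    (hT₁ : slashEnd k translation f₁ = f₁ + d • f₂) :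
    d ^ 2 = 1 - (-1) ^ k := by
  have hS₁ : slashEnd k frickeTwo f₁ = ((-1 : ℂ) ^ k) • f₂ := by
    rw [← hS₂, ← Module.End.mul_apply, ← slashEnd_mul, ← sq, frickeTwo_sq, slashEnd_neg_one_apply]
  have hST : ((slashEnd k frickeTwo * slashEnd k translation) ^ 4) f₂ = ((-1 : ℂ) ^ k) • f₂ := by
    rw [← slashEnd_mul, ← slashEnd_pow, translation_mul_frickeTwo_pow_four, slashEnd_neg_one_apply]
  exact sq_eq_one_sub_of_pow_four_apply (zpow_ne_zero k (by simp)) hf₂ hS₂ hS₁ hT₂ hT₁ hST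

end Gamma0PlusTwo

theorem monodromy_constant_Gamma0plus2_general
    (ℓ : ℤ) (yhat₂ : ℂ → ℂ) (hne : ∃ z ∈ UHP, yhat₂ z ≠ 0)
    (yhat₁ : ℂ → ℂ)
    (hy₁ : ∀ z ∈ UHP, yhat₁ z = ((Real.sqrt 2 : ℂ) * z) ^ (-ℓ) * yhat₂ (-1 / (2 * z)))
    (hper₂ : ∀ z ∈ UHP, yhat₂ (z + 1) = yhat₂ z)
    (d : ℂ) (hper₁ : ∀ z ∈ UHP, yhat₁ (z + 1) = yhat₁ z + d * yhat₂ z) :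
    d ^ 2 = 1 - (-1) ^ ℓ := by
  let f₁ : ℍ → ℂ := fun τ ↦ yhat₁ τ
  let f₂ : ℍ → ℂ := fun τ ↦ yhat₂ τ
  have hf₂ : f₂ ≠ 0 := by
    obtain ⟨z, hz, hz_ne⟩ := hne
    exact fun h ↦ hz_ne (congrFun h ⟨z, hz⟩)
  have hS₂ : slashEnd ℓ frickeTwo f₂ = f₁ := by
    ext τ
    simp only [f₁, f₂, slashEnd_apply_apply, jfac_frickeTwo, coe_frickeTwo_smul, hy₁ τ τ.im_pos]
  have hT₂ : slashEnd ℓ translation f₂ = f₂ := by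
    ext τ
    simp [f₂, slashEnd_apply_apply, jfac_translation, coe_translation_smul, hper₂ τ τ.im_pos]
  have hT₁ : slashEnd ℓ translation f₁ = f₁ + d • f₂ := by
    ext τ
    simp [f₁, f₂, slashEnd_apply_apply, jfac_translation, coe_translation_smul, hper₁ τ τ.im_pos]
  exact sq_eq_one_sub_neg_one_zpow_of_slashEnd hf₂ hS₂ hT₂ hT₁

/-- Lemma: normalization of the monodromy constant for `Γ₀⁺(2)`.
If `ℓ` is odd, `ŷ₂` is holomorphic on `ℍ` and 1-periodic,
`ŷ₁(z) = (√2 z)^{-ℓ} ŷ₂(-1/(2z))` satisfies `ŷ₁(z+1) = ŷ₁(z) + d·ŷ₂(z)`, and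
`ŷ₁, ŷ₂` are linearly independent over `ℂ`, then `d² = 2`, i.e. `d = ±√2`. -/
theorem monodromy_constant_Gamma0plus2
    (ℓ : ℤ) (hℓ : Odd ℓ)
    (yhat₂ : ℂ → ℂ) (hholo : DifferentiableOn ℂ yhat₂ UHP)
    (yhat₁ : ℂ → ℂ)
    (hy₁ : ∀ z ∈ UHP, yhat₁ z = ((Real.sqrt 2 : ℂ) * z) ^ (-ℓ) * yhat₂ (-1 / (2 * z)))
    (hper₂ : ∀ z ∈ UHP, yhat₂ (z + 1) = yhat₂ z)
    (d : ℂ) (hper₁ : ∀ z ∈ UHP, yhat₁ (z + 1) = yhat₁ z + d * yhat₂ z)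
    (hindep : ∀ a b : ℂ, (∀ z ∈ UHP, a * yhat₁ z + b * yhat₂ z = 0) → a = 0 ∧ b = 0) :
    d ^ 2 = 2 := by
  have hne : ∃ z ∈ UHP, yhat₂ z ≠ 0 := by
    by_contra! hzero
    exact one_ne_zero (hindep 0 1 fun z hz ↦ by simp [hzero z hz]).2
  rw [monodromy_constant_Gamma0plus2_general ℓ yhat₂ hne yhat₁ hy₁ hper₂ d hper₁,
    hℓ.neg_one_zpow]
  norm_num
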